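/- Let H be the Bethe–Salpeter matrix and assume that all 2n eigenvalues of H are simple (the characteristic polynomial of H has 2n distinct roots). Then there exist an invertible matrix X ∈ ℂ^{2n×2n} satisfying X·Π = Π·conj(X) (a Π⁺-matrix), and a matrix Λ = [[Λ₁, Λ₂],[−conj(Λ₂), −conj(Λ₁)]] ∈ ℂ^{2n×2n} with Λ₁, Λ₂ ∈ ℂ^{n×n} both diagonal (a Π⁻-diagonal matrix), such that H·X = X·Λ. -/

import Mathlib

open Matrix Complex

noncomputable section

/-- The matrix Π = [[0, I],[I, 0]]. -/
def PiMat (n : ℕ) : Matrix (Fin n ⊕ Fin n) (Fin n ⊕ Fin n) ℂ :=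
  Matrix.fromBlocks 0 1 1 0

/-- The matrix Γ₀ = diag(I, −I). -/
def GammaZero (n : ℕ) : Matrix (Fin n ⊕ Fin n) (Fin n ⊕ Fin n) ℂ :=
  Matrix.fromBlocks 1 0 0 (-1)

/-- Entrywise complex conjugate of a matrix. -/
def mconj {α β : Type*} (M : Matrix α β ℂ) : Matrix α β ℂ :=
  M.map (starRingEnd ℂ)

/-- The Bethe–Salpeter matrix H = [[A, B],[−conj B, −conj A]]. -/
def BSmat {n : ℕ} (A B : Matrix (Fin n) (Fin n) ℂ) :
    Matrix (Fin n ⊕ Fin n) (Fin n ⊕ Fin n) ℂ :=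
  Matrix.fromBlocks A B (-(mconj B)) (-(mconj A))

/-- Membership in 𝔾_{2k}: Γ = diag(J, −J) with J diagonal with ±1 entries. -/
def IsGammaMat {k : ℕ} (Γ : Matrix (Fin k ⊕ Fin k) (Fin k ⊕ Fin k) ℂ) : Prop :=
  ∃ d : Fin k → ℂ, (∀ i, d i = 1 ∨ d i = -1) ∧
    Γ = Matrix.fromBlocks (Matrix.diagonal d) 0 0 (-(Matrix.diagonal d))

/-- G is a Π^ε-matrix (ε = 1 : Π⁺, ε = −1 : Π⁻): G·Π_{2m} = ε·Π_{2n}·conj(G). -/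
def IsPiMat {n m : ℕ} (ε : ℂ) (G : Matrix (Fin n ⊕ Fin n) (Fin m ⊕ Fin m) ℂ) : Prop :=
  G * PiMat m = ε • (PiMat n * mconj G)

/-- R is Π^ε-upper triangular. -/
def IsPiUpperTri {n m : ℕ} (ε : ℂ) (R : Matrix (Fin n ⊕ Fin n) (Fin m ⊕ Fin m) ℂ) : Prop :=
  ∃ R₁ R₂ : Matrix (Fin n) (Fin m) ℂ,
    R = Matrix.fromBlocks R₁ R₂ (ε • mconj R₂) (ε • mconj R₁) ∧
    (∀ (i : Fin n) (j : Fin m), (j : ℕ) < (i : ℕ) → R₁ i j = 0) ∧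
    (∀ (i : Fin n) (j : Fin m), (j : ℕ) ≤ (i : ℕ) → R₂ i j = 0)

/-- The i-th Π⁻-leading principal minor of a 2m×2m matrix. -/
def piLeadingMinor {m : ℕ} (M : Matrix (Fin m ⊕ Fin m) (Fin m ⊕ Fin m) ℂ)
    (i : ℕ) (h : i ≤ m) : ℂ :=
  (Matrix.fromBlocks
    ((M.toBlocks₁₁).submatrix (Fin.castLE h) (Fin.castLE h))
    ((M.toBlocks₁₂).submatrix (Fin.castLE h) (Fin.castLE h))
    ((M.toBlocks₂₁).submatrix (Fin.castLE h) (Fin.castLE h))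
    ((M.toBlocks₂₂).submatrix (Fin.castLE h) (Fin.castLE h))).det

/-!
The antilinear involution `J v = Π v̄` anticommutes with `H`, so `J` maps the eigenspace of `z` to
that of `-z̄`, and the spectrum is symmetric about the imaginary axis. Since there are `2n`
eigenvalues, the ones on the axis are even in number, and the spectrum splits into `n` pairs
`{a, b}` that are either of the form `b = -ā` or purely imaginary. For each pair there is a vector
`x` such that `x` and `J x` span the sum of the two eigenlines: in the first case an eigenvector for
`a`; in the second `u + i w`, where `u` and `w` are eigenvectors fixed by `J`. The vectors `x`
followed by the `J x` are the columns of `X`, and the invariance of the planes spanned by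
`x` and `J x` says that the blocks of `Λ` are diagonal.
-/

open Function Module Polynomial Submodule Sum
open scoped ComplexConjugate

section Involution

variable {α : Type*} {σ : α → α} {S : Finset α}

/-- The relation between the two members of a pair when a set stable under an involution `σ` is cut
into `σ`-stable pairs: `σ` takes `a` to `b`, or it fixes both. -/
def IsPaired (σ : α → α) (a b : α) : Prop :=
  b = σ a ∨ IsFixedPt σ a ∧ IsFixedPt σ b

lemma exists_ne_isPaired_of_one_lt_card (hS : 1 < S.card) (hσS : ∀ z ∈ S, σ z ∈ S) :
    ∃ a ∈ S, ∃ b ∈ S, a ≠ b ∧ IsPaired σ a b := by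
  by_cases h : ∀ a ∈ S, IsFixedPt σ a
  · obtain ⟨a, ha, b, hb, hab⟩ := Finset.one_lt_card.1 hS
    exact ⟨a, ha, b, hb, hab, .inr ⟨h a ha, h b hb⟩⟩
  · push Not at h
    obtain ⟨a, ha, hne⟩ := h
    exact ⟨a, ha, σ a, hσS a ha, Ne.symm hne, .inl rfl⟩

lemma exists_injective_isPaired (hσ : Involutive σ) {n : ℕ} (hS : S.card = 2 * n)
    (hσS : ∀ z ∈ S, σ z ∈ S) :
    ∃ e : Fin n ⊕ Fin n → α, Injective e ∧ (∀ k, e k ∈ S) ∧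
      ∀ i, IsPaired σ (e (inl i)) (e (inr i)) := by
  classical
  induction n generalizing S with
  | zero => exact ⟨isEmptyElim, injective_of_subsingleton _, isEmptyElim, isEmptyElim⟩
  | succ n ih =>
    obtain ⟨a, ha, b, hb, hab, hpair⟩ := exists_ne_isPaired_of_one_lt_card (by lia) hσS
    have hstable : ∀ z ∈ (S.erase a).erase b, σ z ∈ (S.erase a).erase b := by
      intro z hz
      have hσz := hσ z
      have hσa := hσ a
      grind [IsPaired, IsFixedPt]
    obtain ⟨e, he, heS, hepair⟩ := ih (by grind) hstable
    have hea k : e k ≠ a := by grind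
    have heb k : e k ≠ b := by grind
    refine ⟨Sum.elim (Fin.cons a (e ∘ inl)) (Fin.cons b (e ∘ inr)), ?_, ?_, ?_⟩
    · refine Injective.sumElim ?_ ?_ ?_
      · exact Fin.cons_injective_iff.2 ⟨by simp [hea], he.comp inl_injective⟩
      · exact Fin.cons_injective_iff.2 ⟨by simp [heb], he.comp inr_injective⟩
      · simp [Fin.forall_fin_succ, hab, heb, he.eq_iff, fun k ↦ (hea k).symm]
    · simp_all [Fin.forall_fin_succ]
    · simpa [Fin.forall_fin_succ] using ⟨hpair, hepair⟩

end Involution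

section AntilinearInvolution

variable {V : Type*} [AddCommGroup V] [Module ℂ V] {T : End ℂ V} {J : V →ₗ⋆[ℂ] V} {a b : ℂ}

lemma hasEigenvector_neg_conj (hJ : Injective J) (hTJ : ∀ v, T (J v) = -J (T v)) {v : V}
    (hv : T.HasEigenvector a v) : T.HasEigenvector (-conj a) (J v) := by
  refine ⟨End.mem_eigenspace_iff.2 ?_, (map_ne_zero_iff J hJ).2 hv.2⟩
  rw [hTJ, hv.apply_eq_smul, map_smulₛₗ, neg_smul]

lemma hasEigenvalue_neg_conj (hJ : Injective J) (hTJ : ∀ v, T (J v) = -J (T v))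
    (ha : T.HasEigenvalue a) : T.HasEigenvalue (-conj a) :=
  let ⟨_, hv⟩ := ha.exists_hasEigenvector
  End.hasEigenvalue_of_hasEigenvector (hasEigenvector_neg_conj hJ hTJ hv)

lemma exists_hasEigenvector_isFixedPt (hJ : Involutive J) (hTJ : ∀ v, T (J v) = -J (T v))
    (ha : T.HasEigenvalue a) (hfix : IsFixedPt (fun z : ℂ ↦ -conj z) a) :
    ∃ u, T.HasEigenvector a u ∧ IsFixedPt J u := by
  obtain ⟨v, hv⟩ := ha.exists_hasEigenvector
  have hJv := hasEigenvector_neg_conj hJ.injective hTJ hv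
  rw [show -conj a = a from hfix] at hJv
  by_cases h0 : v + J v = 0
  · refine ⟨I • v, ⟨smul_mem _ _ hv.1, smul_ne_zero I_ne_zero hv.2⟩, ?_⟩
    simp [IsFixedPt, map_smulₛₗ, ← neg_eq_of_add_eq_zero_right h0]
  · exact ⟨v + J v, ⟨add_mem hv.1 hJv.1, h0⟩, by simp [IsFixedPt, hJ v, add_comm]⟩

lemma exists_hasEigenvector_mem_span_pair (hJ : Involutive J) (hTJ : ∀ v, T (J v) = -J (T v))
    (ha : T.HasEigenvalue a) (hb : T.HasEigenvalue b)
    (hab : IsPaired (fun z : ℂ ↦ -conj z) a b) :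
    ∃ x u w, T x ∈ span ℂ {x, J x} ∧ u ∈ span ℂ {x, J x} ∧ w ∈ span ℂ {x, J x} ∧
      T.HasEigenvector a u ∧ T.HasEigenvector b w := by
  rcases hab with rfl | ⟨hfa, hfb⟩
  · obtain ⟨v, hv⟩ := ha.exists_hasEigenvector
    have hvmem : v ∈ span ℂ {v, J v} := mem_span_of_mem (by simp)
    refine ⟨v, v, J v, ?_, hvmem, mem_span_of_mem (by simp), hv,
      hasEigenvector_neg_conj hJ.injective hTJ hv⟩
    rw [hv.apply_eq_smul]
    exact smul_mem _ a hvmem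
  · obtain ⟨u, hu, hJu⟩ := exists_hasEigenvector_isFixedPt hJ hTJ ha hfa
    obtain ⟨w, hw, hJw⟩ := exists_hasEigenvector_isFixedPt hJ hTJ hb hfb
    have hJx : J (u + I • w) = u - I • w := by
      simp [map_smulₛₗ, hJu.eq, hJw.eq, sub_eq_add_neg]
    set W := span ℂ {u + I • w, J (u + I • w)}
    have hxW : u + I • w ∈ W := mem_span_of_mem (by simp)
    have hJxW : u - I • w ∈ W := hJx ▸ mem_span_of_mem (by simp)
    have huW : u ∈ W := (smul_mem_iff W (two_ne_zero (α := ℂ))).1 <| by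
      convert add_mem hxW hJxW using 1
      module
    have hIwW : I • w ∈ W := by simpa using sub_mem hxW huW
    have hwW : w ∈ W := (smul_mem_iff W I_ne_zero).1 hIwW
    have hTx : T (u + I • w) = a • u + I • b • w := by
      rw [map_add, map_smul, hu.apply_eq_smul, hw.apply_eq_smul]
    refine ⟨u + I • w, u, w, ?_, huW, hwW, hu, hw⟩
    rw [hTx]
    exact add_mem (smul_mem _ _ huW) (smul_mem _ _ (smul_mem _ _ hwW))

theorem exists_basis_inr_eq_apply_inl {ι : Type*} [Fintype ι] [FiniteDimensional ℂ V]
    (hJ : Involutive J) (hTJ : ∀ v, T (J v) = -J (T v)) {e : ι ⊕ ι → ℂ} (he : Injective e)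
    (heig : ∀ k, T.HasEigenvalue (e k))
    (hpair : ∀ i, IsPaired (fun z ↦ -conj z) (e (inl i)) (e (inr i)))
    (hdim : finrank ℂ V = Fintype.card (ι ⊕ ι)) :
    ∃ x : Basis (ι ⊕ ι) ℂ V, (∀ i, x (inr i) = J (x (inl i))) ∧
      ∀ i, T (x (inl i)) ∈ span ℂ {x (inl i), x (inr i)} := by
  choose x u w hTx hux hwx hu hw using fun i ↦
    exists_hasEigenvector_mem_span_pair hJ hTJ (heig (inl i)) (heig (inr i)) (hpair i)
  have hli : LinearIndependent ℂ (Sum.elim u w) :=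
    End.eigenvectors_linearIndependent' T e he _ (Sum.rec hu hw)
  let y : ι ⊕ ι → V := Sum.elim x (J ∘ x)
  have hy i : span ℂ {x i, J (x i)} ≤ span ℂ (Set.range y) :=
    span_mono <| Set.pair_subset ⟨inl i, rfl⟩ ⟨inr i, rfl⟩
  have hspan : ⊤ ≤ span ℂ (Set.range y) := by
    rw [← hli.span_eq_top_of_card_eq_finrank' hdim.symm, span_le]
    rintro _ ⟨i | i, rfl⟩
    exacts [hy i (hux i), hy i (hwx i)]
  exact ⟨basisOfTopLeSpanOfCardEqFinrank y hspan hdim.symm, by simp [y], by simpa [y] using hTx⟩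

end AntilinearInvolution

section PiMatrix

variable {α β γ : Type*} [Fintype β] {n m l : ℕ} {ε δ : ℂ}

/-- The antilinear map `v ↦ Π v̄` on `ℂ²ⁿ`. It exchanges the columns `j` and `n + j` of a
`Π⁺`-matrix, and anticommutes with `Π⁻`-matrices. -/
def piConj (n : ℕ) : (Fin n ⊕ Fin n → ℂ) →ₗ⋆[ℂ] (Fin n ⊕ Fin n → ℂ) where
  toFun v := PiMat n *ᵥ star v
  map_add' v w := by rw [star_add, mulVec_add]
  map_smul' c v := by rw [star_smul, mulVec_smul, starRingEnd_apply]

lemma piConj_apply (v : Fin n ⊕ Fin n → ℂ) (k : Fin n ⊕ Fin n) :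
    piConj n v k = conj (v k.swap) := by
  rcases k with k | k <;> simp [piConj, PiMat, fromBlocks_mulVec]

lemma piConj_involutive : Involutive (piConj n) := fun v ↦ by
  ext k
  simp [piConj_apply]

lemma mconj_mulVec_star (M : Matrix α β ℂ) (v : β → ℂ) :
    mconj M *ᵥ star v = star (M *ᵥ v) := by
  ext k
  simp [mconj, mulVec, dotProduct]

lemma mconj_mul (M : Matrix α β ℂ) (N : Matrix β γ ℂ) :
    mconj (M * N) = mconj M * mconj N :=
  Matrix.map_mul

lemma isPiMat_neg_one_BSmat (A B : Matrix (Fin n) (Fin n) ℂ) : IsPiMat (-1) (BSmat A B) := by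
  have hblocks : mconj (BSmat A B) = fromBlocks (mconj A) (mconj B) (-B) (-A) := by
    ext (i | i) (j | j) <;> simp [BSmat, mconj]
  rw [IsPiMat, hblocks]
  simp [BSmat, PiMat, fromBlocks_multiply, fromBlocks_neg]

namespace IsPiMat

variable {G G' : Matrix (Fin n ⊕ Fin n) (Fin m ⊕ Fin m) ℂ}

protected lemma mul {K : Matrix (Fin m ⊕ Fin m) (Fin l ⊕ Fin l) ℂ} (hG : IsPiMat ε G)
    (hK : IsPiMat δ K) : IsPiMat (ε * δ) (G * K) := by
  rw [IsPiMat] at hG hK ⊢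
  rw [Matrix.mul_assoc, hK, Matrix.mul_smul, ← Matrix.mul_assoc, hG, mconj_mul, Matrix.smul_mul,
    smul_smul, mul_comm δ, Matrix.mul_assoc]

lemma mulVec_piConj (hG : IsPiMat ε G) (v : Fin m ⊕ Fin m → ℂ) :
    G *ᵥ piConj m v = ε • piConj n (G *ᵥ v) := by
  change G *ᵥ (PiMat m *ᵥ star v) = ε • (PiMat n *ᵥ star (G *ᵥ v))
  rw [mulVec_mulVec, hG, smul_mulVec, ← mulVec_mulVec, mconj_mulVec_star]

lemma col_inr (hG : IsPiMat ε G) (j : Fin m) :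
    G.col (inr j) = ε • piConj n (G.col (inl j)) := by
  have h := hG.mulVec_piConj (Pi.single (inl j) 1)
  have hs : piConj m (Pi.single (inl j) 1) = Pi.single (inr j) 1 := by
    ext (k | k) <;> simp [piConj_apply, Pi.single_apply, apply_ite]
  rwa [hs, mulVec_single_one, mulVec_single_one] at h

lemma ext_col_inl (hG : IsPiMat ε G) (hG' : IsPiMat ε G')
    (h : ∀ j, G.col (inl j) = G'.col (inl j)) : G = G' := by
  refine ext_col ?_
  rintro (j | j)
  · exact h j
  · rw [hG.col_inr, hG'.col_inr, h]

end IsPiMat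

lemma isPiMat_one_of_col_inr {G : Matrix (Fin n ⊕ Fin n) (Fin m ⊕ Fin m) ℂ}
    (h : ∀ j, G.col (inr j) = piConj n (G.col (inl j))) : IsPiMat 1 G := by
  have h' k j : G k (inr j) = conj (G k.swap (inl j)) := by
    simpa [piConj_apply] using congrFun (h j) k
  ext k (j | j) <;> rcases k with k | k <;>
    simp [PiMat, mconj, mul_apply, one_apply, h']

lemma col_inl_mul_BSmat_diagonal (X : Matrix α (Fin n ⊕ Fin n) ℂ) (d f : Fin n → ℂ) (j : Fin n) :
    (X * BSmat (diagonal d) (diagonal f)).col (inl j) =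
      d j • X.col (inl j) - conj (f j) • X.col (inr j) := by
  ext k
  simp [BSmat, mconj, mul_apply, diagonal_apply, apply_ite, mul_comm, sub_eq_add_neg]

lemma BSmat_mul_eq_mul_BSmat_diagonal {A B : Matrix (Fin n) (Fin n) ℂ}
    {X : Matrix (Fin n ⊕ Fin n) (Fin m ⊕ Fin m) ℂ} {d f : Fin m → ℂ} (hX : IsPiMat 1 X)
    (h : ∀ j, BSmat A B *ᵥ X.col (inl j) = d j • X.col (inl j) - conj (f j) • X.col (inr j)) :
    BSmat A B * X = X * BSmat (diagonal d) (diagonal f) := by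
  have hHX := (isPiMat_neg_one_BSmat A B).mul hX
  have hXΛ := hX.mul (isPiMat_neg_one_BSmat (diagonal d) (diagonal f))
  rw [mul_one] at hHX
  rw [one_mul] at hXΛ
  exact hHX.ext_col_inl hXΛ fun j ↦ (h j).trans (col_inl_mul_BSmat_diagonal X d f j).symm

end PiMatrix

lemma mem_roots_charpoly_iff_hasEigenvalue {ι K : Type*} [Fintype ι] [DecidableEq ι] [Field K]
    {M : Matrix ι ι K} {z : K} :
    z ∈ M.charpoly.roots ↔ End.HasEigenvalue (toLin' M) z := by
  rw [mem_roots M.charpoly_monic.ne_zero, End.hasEigenvalue_iff_isRoot_charpoly, charpoly_toLin']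

theorem stmt9_general (n : ℕ) (A B : Matrix (Fin n) (Fin n) ℂ)
    (hsimple : ((BSmat A B).charpoly.roots.toFinset.card = 2 * n)) :
    ∃ (X : Matrix (Fin n ⊕ Fin n) (Fin n ⊕ Fin n) ℂ)
      (Λ₁ Λ₂ : Matrix (Fin n) (Fin n) ℂ),
      IsUnit X.det ∧
      X * PiMat n = PiMat n * mconj X ∧
      Λ₁.IsDiag ∧ Λ₂.IsDiag ∧
      BSmat A B * X =
        X * Matrix.fromBlocks Λ₁ Λ₂ (-(mconj Λ₂)) (-(mconj Λ₁)) := by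
  have hHJ v : toLin' (BSmat A B) (piConj n v) = -piConj n (toLin' (BSmat A B) v) := by
    simpa using (isPiMat_neg_one_BSmat A B).mulVec_piConj v
  have hroots z : z ∈ (BSmat A B).charpoly.roots.toFinset ↔
      End.HasEigenvalue (toLin' (BSmat A B)) z :=
    Multiset.mem_toFinset.trans mem_roots_charpoly_iff_hasEigenvalue
  obtain ⟨e, he, heS, hpair⟩ := exists_injective_isPaired (σ := fun z : ℂ ↦ -conj z)
    (fun z ↦ by simp) hsimple fun z hz ↦
      (hroots _).2 (hasEigenvalue_neg_conj piConj_involutive.injective hHJ ((hroots z).1 hz))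
  obtain ⟨x, hxJ, hxH⟩ := exists_basis_inr_eq_apply_inl piConj_involutive hHJ he
    (fun k ↦ (hroots _).1 (heS k)) hpair (by simp)
  choose d f hdf using fun i ↦ mem_span_pair.1 (hxH i)
  have hX : IsPiMat 1 (of x)ᵀ := isPiMat_one_of_col_inr hxJ
  refine ⟨(of x)ᵀ, diagonal d, diagonal fun i ↦ -conj (f i), ?_, by simpa [IsPiMat] using hX,
    isDiag_diagonal _, isDiag_diagonal _, BSmat_mul_eq_mul_BSmat_diagonal hX fun j ↦ ?_⟩
  · rw [← isUnit_iff_isUnit_det, ← linearIndependent_cols_iff_isUnit]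
    exact x.linearIndependent
  · simpa using (hdf j).symm

/-- if all eigenvalues of H are simple, H has an eigendecomposition
H·X = X·Λ with X an invertible Π⁺-matrix and Λ Π⁻-diagonal. -/
theorem stmt9 (n : ℕ) (hn : 0 < n) (A B : Matrix (Fin n) (Fin n) ℂ)
    (hA : Aᴴ = A) (hB : Bᵀ = B)
    (hsimple : ((BSmat A B).charpoly.roots.toFinset.card = 2 * n)) :
    ∃ (X : Matrix (Fin n ⊕ Fin n) (Fin n ⊕ Fin n) ℂ)
      (Λ₁ Λ₂ : Matrix (Fin n) (Fin n) ℂ),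
      IsUnit X.det ∧
      X * PiMat n = PiMat n * mconj X ∧
      Λ₁.IsDiag ∧ Λ₂.IsDiag ∧
      BSmat A B * X =
        X * Matrix.fromBlocks Λ₁ Λ₂ (-(mconj Λ₂)) (-(mconj Λ₁)) :=
  stmt9_general n A B hsimple

end
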